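/- arXiv:2106.13406 — 6 statements merged into one kernel-verified Lean document; each statement's English description precedes it below -/
import Mathlib

section
/- Let l, L, ℓ₁, ℓ₂, ℓ₃ be real numbers with 0 < l ≤ L and l ≤ ℓᵢ ≤ L for i = 1, 2, 3, and let w ≥ 0 be a real number satisfying cosh w = (cosh(ℓ₃/2) + cosh(ℓ₁/2)·cosh(ℓ₂/2)) / (sinh(ℓ₁/2)·sinh(ℓ₂/2)). Then w < log(cosh(L/2)) + K₁(l), where K₁(l) = log(2 / sinh²(l/2)) + log(cosh²(l/2) + 1) + log 2. -/
noncomputable def K₁ (l : ℝ) : ℝ :=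
  Real.log (2 / Real.sinh (l / 2) ^ 2) + Real.log (Real.cosh (l / 2) ^ 2 + 1) +
    Real.log 2



lemma aux_coth {a b : ℝ} (h : a ≤ b) :
    Real.cosh (b / 2) * Real.sinh (a / 2) ≤ Real.cosh (a / 2) * Real.sinh (b / 2) := by
  have h0 : 0 ≤ Real.sinh (b / 2 - a / 2) := Real.sinh_nonneg_iff.2 (by linarith)
  rw [Real.sinh_sub] at h0
  linarith

theorem hexagon_side_lt_log_cosh_add (l L ℓ₁ ℓ₂ ℓ₃ w : ℝ)
    (hl : 0 < l) (hlL : l ≤ L)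
    (h1 : l ≤ ℓ₁) (h1' : ℓ₁ ≤ L) (h2 : l ≤ ℓ₂) (h2' : ℓ₂ ≤ L)
    (h3 : l ≤ ℓ₃) (h3' : ℓ₃ ≤ L) (hw : 0 ≤ w)
    (hhex : Real.cosh w =
      (Real.cosh (ℓ₃ / 2) + Real.cosh (ℓ₁ / 2) * Real.cosh (ℓ₂ / 2)) /
        (Real.sinh (ℓ₁ / 2) * Real.sinh (ℓ₂ / 2))) :
    w < Real.log (Real.cosh (L / 2)) + K₁ l := by
  have hs : 0 < Real.sinh (l / 2) := Real.sinh_pos_iff.2 (by linarith)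
  have hs1 : Real.sinh (l / 2) ≤ Real.sinh (ℓ₁ / 2) := Real.sinh_le_sinh.2 (by linarith)
  have hs2 : Real.sinh (l / 2) ≤ Real.sinh (ℓ₂ / 2) := Real.sinh_le_sinh.2 (by linarith)
  have hc3 : Real.cosh (ℓ₃ / 2) ≤ Real.cosh (L / 2) := by
    apply Real.cosh_le_cosh.2
    rw [abs_of_pos (by linarith), abs_of_pos (by linarith)]
    linarith
  have k1 := aux_coth h1
  have k2 := aux_coth h2
  have hC : 1 ≤ Real.cosh (L / 2) := Real.one_le_cosh _
  have p1 := Real.cosh_pos (ℓ₁ / 2)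
  have p2 := Real.cosh_pos (ℓ₂ / 2)
  have p := Real.cosh_pos (l / 2)
  have hexp : Real.exp w < 2 * Real.cosh w := by
    rw [Real.cosh_eq]
    have := Real.exp_pos (-w)
    linarith
  unfold K₁
  generalize Real.sinh (l / 2) = s at *
  generalize Real.sinh (ℓ₁ / 2) = s1 at *
  generalize Real.sinh (ℓ₂ / 2) = s2 at *
  generalize Real.cosh (l / 2) = c at *
  generalize Real.cosh (ℓ₁ / 2) = c1 at *
  generalize Real.cosh (ℓ₂ / 2) = c2 at *
  generalize Real.cosh (ℓ₃ / 2) = c3 at *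
  generalize Real.cosh (L / 2) = C at *
  have q1 : 0 < s1 := by linarith
  have q2 : 0 < s2 := by linarith
  have hCp : 0 < C := by linarith
  have m1 : s * s ≤ s1 * s2 := by gcongr
  have m2 : (c1 * s) * (c2 * s) ≤ (c * s1) * (c * s2) := by gcongr
  have m3 : c3 * (s * s) ≤ C * (s1 * s2) := by gcongr
  have key : Real.cosh w ≤ C * (c ^ 2 + 1) / s ^ 2 := by
    rw [hhex, div_le_div_iff₀ (by positivity) (by positivity)]
    have m4 : 0 ≤ (C - 1) * (c ^ 2 * (s1 * s2)) :=
      mul_nonneg (by linarith) (by positivity)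
    nlinarith
  have hpos : 0 < C * (c ^ 2 + 1) / s ^ 2 := by positivity
  rw [← Real.log_mul (by positivity) (by positivity),
    ← Real.log_mul (by positivity) (by positivity),
    ← Real.log_mul (by positivity) (by positivity),
    Real.lt_log_iff_exp_lt (by positivity)]
  have e : C * (2 / s ^ 2 * (c ^ 2 + 1) * 2) = 4 * (C * (c ^ 2 + 1) / s ^ 2) := by ring
  rw [e]
  linarith
end

section
/- Let l, L, ℓ₁, ℓ₂, ℓ₃ be real numbers with 0 < l ≤ L and l ≤ ℓᵢ ≤ L for i = 1, 2, 3, and let w ≥ 0 be a real number satisfying cosh w = (cosh(ℓ₃/2) + cosh(ℓ₁/2)·cosh(ℓ₂/2)) / (sinh(ℓ₁/2)·sinh(ℓ₂/2)). Then w < L + K₁(l), where K₁(l) = log(2 / sinh²(l/2)) + log(cosh²(l/2) + 1) + log 2. -/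
theorem coth_aux (x y : ℝ) (hx : 0 < x) (hxy : x ≤ y) :
    Real.cosh y / Real.sinh y ≤ Real.cosh x / Real.sinh x := by
  have hs : 0 < Real.sinh x := Real.sinh_pos_iff.2 hx
  have ht : 0 < Real.sinh y := Real.sinh_pos_iff.2 (hx.trans_le hxy)
  rw [div_le_div_iff₀ ht hs]
  have h : 0 ≤ Real.sinh (y - x) := Real.sinh_nonneg_iff.2 (by linarith)
  rw [Real.sinh_sub] at h
  linarith

theorem hexagon_side_lt_L_add (l L ℓ₁ ℓ₂ ℓ₃ w : ℝ)
    (hl : 0 < l) (hlL : l ≤ L)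
    (h1 : l ≤ ℓ₁) (h1' : ℓ₁ ≤ L) (h2 : l ≤ ℓ₂) (h2' : ℓ₂ ≤ L)
    (h3 : l ≤ ℓ₃) (h3' : ℓ₃ ≤ L) (hw : 0 ≤ w)
    (hhex : Real.cosh w =
      (Real.cosh (ℓ₃ / 2) + Real.cosh (ℓ₁ / 2) * Real.cosh (ℓ₂ / 2)) /
        (Real.sinh (ℓ₁ / 2) * Real.sinh (ℓ₂ / 2))) :
    w < L + K₁ l := by
  have hs : 0 < Real.sinh (l / 2) := Real.sinh_pos_iff.2 (by linarith)
  have hs1 : Real.sinh (l / 2) ≤ Real.sinh (ℓ₁ / 2) := Real.sinh_le_sinh.2 (by linarith)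
  have hs2 : Real.sinh (l / 2) ≤ Real.sinh (ℓ₂ / 2) := Real.sinh_le_sinh.2 (by linarith)
  have c1 := coth_aux (l / 2) (ℓ₁ / 2) (by linarith) (by linarith)
  have c2 := coth_aux (l / 2) (ℓ₂ / 2) (by linarith) (by linarith)
  have hc : 0 < Real.cosh (l / 2) := Real.cosh_pos _
  have hc2 : 0 < Real.cosh (ℓ₂ / 2) := Real.cosh_pos _
  have hc3 : 0 < Real.cosh (ℓ₃ / 2) := Real.cosh_pos _
  have hE : 1 ≤ Real.exp L := Real.one_le_exp (by linarith)
  have h3E : Real.cosh (ℓ₃ / 2) ≤ Real.exp L := by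
    rw [Real.cosh_eq]
    have a : Real.exp (ℓ₃ / 2) ≤ Real.exp L := Real.exp_le_exp.2 (by linarith)
    have b : Real.exp (-(ℓ₃ / 2)) ≤ Real.exp L := Real.exp_le_exp.2 (by linarith)
    linarith
  set s := Real.sinh (l / 2)
  set c := Real.cosh (l / 2)
  have hs1p := hs.trans_le hs1
  have hs2p := hs.trans_le hs2
  have hcosh : Real.cosh w ≤ Real.exp L * ((c ^ 2 + 1) / s ^ 2) := by
    have e1 : Real.cosh (ℓ₃ / 2) / (Real.sinh (ℓ₁ / 2) * Real.sinh (ℓ₂ / 2))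
        ≤ Real.exp L / (s * s) := by gcongr
    have e2 : Real.cosh (ℓ₁ / 2) / Real.sinh (ℓ₁ / 2) *
        (Real.cosh (ℓ₂ / 2) / Real.sinh (ℓ₂ / 2)) ≤ (c / s) * (c / s) := by
      gcongr
    have e3 : (c / s) * (c / s) ≤ Real.exp L * ((c / s) * (c / s)) :=
      le_mul_of_one_le_left (by positivity) hE
    rw [hhex, add_div, mul_div_mul_comm]
    calc _ ≤ Real.exp L / (s * s) + Real.exp L * ((c / s) * (c / s)) := by linarith
      _ = _ := by field_simp; ring
  have hK : Real.exp (L + K₁ l) = Real.exp L * (4 * ((c ^ 2 + 1) / s ^ 2)) := by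
    unfold K₁
    rw [Real.exp_add, Real.exp_add, Real.exp_add, Real.exp_log (by positivity),
      Real.exp_log (by positivity), Real.exp_log (by positivity)]
    ring
  rw [← Real.exp_lt_exp, hK]
  have hlt := Real.sinh_lt_cosh w
  have hsum := Real.cosh_add_sinh w
  have hp := Real.cosh_pos w
  linarith
end

section
/- Let l, L, ℓ₀, ℓ₁, ℓ₂ be real numbers with 0 < l ≤ L, l ≤ ℓ₁ ≤ L, l ≤ ℓ₂ ≤ L, and ℓ₀ > 0. Let x₀ be a real number with x₀ + η(ℓ₀) ≥ 0 satisfying cosh(x₀ + η(ℓ₀)) = (cosh(ℓ₁/2) + cosh(ℓ₀/2)·cosh(ℓ₂/2)) / (sinh(ℓ₀/2)·sinh(ℓ₂/2)), where η(ℓ) = arsinh(1/sinh(ℓ/2)). Then x₀ < L/2 + log((1 + cosh(ℓ₀/2)) / sinh(l/2)). -/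
noncomputable def η (ℓ : ℝ) : ℝ := Real.arsinh (1 / Real.sinh (ℓ / 2))

theorem truncated_side_bound_one_cusp (l L ℓ₀ ℓ₁ ℓ₂ x₀ : ℝ)
    (hl : 0 < l) (hlL : l ≤ L)
    (h1 : l ≤ ℓ₁) (h1' : ℓ₁ ≤ L) (h2 : l ≤ ℓ₂) (h2' : ℓ₂ ≤ L)
    (h0 : 0 < ℓ₀) (hx : 0 ≤ x₀ + η ℓ₀)
    (hhex : Real.cosh (x₀ + η ℓ₀) =
      (Real.cosh (ℓ₁ / 2) + Real.cosh (ℓ₀ / 2) * Real.cosh (ℓ₂ / 2)) /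
        (Real.sinh (ℓ₀ / 2) * Real.sinh (ℓ₂ / 2))) :
    x₀ < L / 2 + Real.log ((1 + Real.cosh (ℓ₀ / 2)) / Real.sinh (l / 2)) := by
  have hs : 0 < Real.sinh (ℓ₀ / 2) := Real.sinh_pos_iff.2 (by linarith)
  have ht : 0 < Real.sinh (l / 2) := Real.sinh_pos_iff.2 (by linarith)
  have ht2 : Real.sinh (l / 2) ≤ Real.sinh (ℓ₂ / 2) := Real.sinh_le_sinh.2 (by linarith)
  have hc : 1 ≤ Real.cosh (ℓ₀ / 2) := Real.one_le_cosh _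
  have hC1 : Real.cosh (ℓ₁ / 2) ≤ Real.exp (L / 2) := by
    rw [Real.cosh_eq]
    have a : Real.exp (ℓ₁ / 2) ≤ Real.exp (L / 2) := Real.exp_le_exp.2 (by linarith)
    have b : Real.exp (-(ℓ₁ / 2)) ≤ Real.exp (L / 2) := Real.exp_le_exp.2 (by linarith)
    linarith
  have hC2 : Real.cosh (ℓ₂ / 2) ≤ Real.exp (L / 2) := by
    rw [Real.cosh_eq]
    have a : Real.exp (ℓ₂ / 2) ≤ Real.exp (L / 2) := Real.exp_le_exp.2 (by linarith)
    have b : Real.exp (-(ℓ₂ / 2)) ≤ Real.exp (L / 2) := Real.exp_le_exp.2 (by linarith)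
    linarith
  have hη : Real.exp (η ℓ₀) = (1 + Real.cosh (ℓ₀ / 2)) / Real.sinh (ℓ₀ / 2) := by
    rw [η, Real.exp_arsinh]
    have : 1 + (1 / Real.sinh (ℓ₀ / 2)) ^ 2
        = (Real.cosh (ℓ₀ / 2) / Real.sinh (ℓ₀ / 2)) ^ 2 := by
      rw [div_pow, div_pow, Real.cosh_sq]
      field_simp
    rw [this, Real.sqrt_sq (by positivity)]
    ring
  have hy : Real.exp (x₀ + η ℓ₀) < 2 * Real.cosh (x₀ + η ℓ₀) := by
    rw [Real.cosh_eq]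
    have := Real.exp_pos (-(x₀ + η ℓ₀))
    linarith
  rw [hhex, Real.exp_add, hη] at hy
  have hE := Real.exp_pos (L / 2)
  generalize Real.cosh (ℓ₀ / 2) = c at *
  generalize Real.sinh (ℓ₀ / 2) = s at *
  have hc0 : 0 < 1 + c := by linarith
  have hb : (Real.cosh (ℓ₁ / 2) + c * Real.cosh (ℓ₂ / 2)) / (s * Real.sinh (ℓ₂ / 2))
      ≤ ((1 + c) * Real.exp (L / 2)) / (s * Real.sinh (l / 2)) := by
    apply div_le_div₀ (by positivity) _ (by positivity) (by gcongr)
    nlinarith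
  have hf : Real.exp x₀ * ((1 + c) / s)
      < 2 * (((1 + c) * Real.exp (L / 2)) / (s * Real.sinh (l / 2))) := by linarith
  have hg : Real.exp x₀ < 2 * Real.exp (L / 2) / Real.sinh (l / 2) := by
    have e : 2 * (((1 + c) * Real.exp (L / 2)) / (s * Real.sinh (l / 2)))
      = (2 * Real.exp (L / 2) / Real.sinh (l / 2)) * ((1 + c) / s) := by
      field_simp
    rw [e] at hf
    exact lt_of_mul_lt_mul_right hf (by positivity)
  rw [← Real.exp_lt_exp, Real.exp_add, Real.exp_log (by positivity)]
  refine hg.trans_le ?_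
  rw [← mul_div_assoc]
  apply div_le_div_of_nonneg_right _ ht.le
  nlinarith
end

section
/- Let l, L, ℓ₁, ℓ₂ be real numbers with 0 < l ≤ L, l ≤ ℓ₁ ≤ L, l ≤ ℓ₂ ≤ L. Suppose f : ℝ → ℝ and δ > 0 are such that for every ℓ₀ with 0 < ℓ₀ < δ one has f(ℓ₀) + η(ℓ₀) ≥ 0 and cosh(f(ℓ₀) + η(ℓ₀)) = (cosh(ℓ₁/2) + cosh(ℓ₀/2)·cosh(ℓ₂/2)) / (sinh(ℓ₀/2)·sinh(ℓ₂/2)), where η(ℓ) = arsinh(1/sinh(ℓ/2)). If f(ℓ₀) tends to a real number x as ℓ₀ tends to 0 from the right, then x ≤ L/2 + log(2 / sinh(l/2)). -/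
theorem truncated_side_limit_bound_one_cusp (l L ℓ₁ ℓ₂ : ℝ) (f : ℝ → ℝ) (δ : ℝ)
    (hl : 0 < l) (hlL : l ≤ L)
    (h1 : l ≤ ℓ₁) (h1' : ℓ₁ ≤ L) (h2 : l ≤ ℓ₂) (h2' : ℓ₂ ≤ L)
    (hδ : 0 < δ)
    (hnn : ∀ ℓ₀, 0 < ℓ₀ → ℓ₀ < δ → 0 ≤ f ℓ₀ + η ℓ₀)
    (hhex : ∀ ℓ₀, 0 < ℓ₀ → ℓ₀ < δ →
      Real.cosh (f ℓ₀ + η ℓ₀) =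
        (Real.cosh (ℓ₁ / 2) + Real.cosh (ℓ₀ / 2) * Real.cosh (ℓ₂ / 2)) /
          (Real.sinh (ℓ₀ / 2) * Real.sinh (ℓ₂ / 2)))
    (x : ℝ)
    (hlim : Filter.Tendsto f (nhdsWithin 0 (Set.Ioi 0)) (nhds x)) :
    x ≤ L / 2 + Real.log (2 / Real.sinh (l / 2)) := by
  have key : ∀ t, 0 < t → t < δ → Real.exp (f t) ≤
      (Real.cosh (ℓ₁ / 2) + Real.cosh (t / 2) * Real.cosh (ℓ₂ / 2)) / Real.sinh (ℓ₂ / 2) := by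
    intro t ht htd
    have hs : 0 < Real.sinh (t / 2) := Real.sinh_pos_iff.mpr (by linarith)
    have hS : 0 < Real.sinh (ℓ₂ / 2) := Real.sinh_pos_iff.mpr (by linarith)
    have he : 2 / Real.sinh (t / 2) ≤ Real.exp (η t) := by
      unfold η
      rw [Real.exp_arsinh]
      have : 1 / Real.sinh (t / 2) ≤ √(1 + (1 / Real.sinh (t / 2)) ^ 2) :=
        Real.le_sqrt_of_sq_le (by linarith)
      have h3 : 2 / Real.sinh (t / 2) = 1 / Real.sinh (t / 2) + 1 / Real.sinh (t / 2) := by ring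
      linarith
    have hc : Real.exp (f t + η t) ≤ 2 * Real.cosh (f t + η t) := by
      rw [Real.cosh_eq]
      have := Real.exp_pos (-(f t + η t))
      linarith
    rw [hhex t ht htd, Real.exp_add] at hc
    have h4 : Real.exp (f t) * (2 / Real.sinh (t / 2)) ≤ 2 * ((Real.cosh (ℓ₁ / 2) +
        Real.cosh (t / 2) * Real.cosh (ℓ₂ / 2)) / (Real.sinh (t / 2) * Real.sinh (ℓ₂ / 2))) :=
      (mul_le_mul_of_nonneg_left he (Real.exp_pos _).le).trans hc
    have h5 := mul_le_mul_of_nonneg_right h4 hs.le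
    have e1 : Real.exp (f t) * (2 / Real.sinh (t / 2)) * Real.sinh (t / 2)
        = 2 * Real.exp (f t) := by field_simp
    have e2 : 2 * ((Real.cosh (ℓ₁ / 2) +
        Real.cosh (t / 2) * Real.cosh (ℓ₂ / 2)) / (Real.sinh (t / 2) * Real.sinh (ℓ₂ / 2)))
        * Real.sinh (t / 2) = 2 * ((Real.cosh (ℓ₁ / 2) +
        Real.cosh (t / 2) * Real.cosh (ℓ₂ / 2)) / Real.sinh (ℓ₂ / 2)) := by field_simp
    rw [e1, e2] at h5
    linarith
  have hg : Filter.Tendsto (fun t : ℝ => (Real.cosh (ℓ₁ / 2) +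
      Real.cosh (t / 2) * Real.cosh (ℓ₂ / 2)) / Real.sinh (ℓ₂ / 2))
      (nhdsWithin 0 (Set.Ioi 0)) (nhds ((Real.cosh (ℓ₁ / 2) +
      Real.cosh (0 / 2) * Real.cosh (ℓ₂ / 2)) / Real.sinh (ℓ₂ / 2))) := by
    have hcont : Continuous (fun t : ℝ => (Real.cosh (ℓ₁ / 2) +
      Real.cosh (t / 2) * Real.cosh (ℓ₂ / 2)) / Real.sinh (ℓ₂ / 2)) := by fun_prop
    exact (hcont.tendsto 0).mono_left nhdsWithin_le_nhds
  have hx : Real.exp x ≤ (Real.cosh (ℓ₁ / 2) +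
      Real.cosh (0 / 2) * Real.cosh (ℓ₂ / 2)) / Real.sinh (ℓ₂ / 2) := by
    refine le_of_tendsto_of_tendsto ((Real.continuous_exp.tendsto x).comp hlim) hg ?_
    filter_upwards [Ioo_mem_nhdsGT hδ] with t ht
    exact key t ht.1 ht.2
  have hS : 0 < Real.sinh (l / 2) := Real.sinh_pos_iff.mpr (by linarith)
  have hSS : Real.sinh (l / 2) ≤ Real.sinh (ℓ₂ / 2) := Real.sinh_le_sinh.mpr (by linarith)
  have hcosh : ∀ a, 0 < a → a ≤ L → Real.cosh (a / 2) ≤ Real.exp (L / 2) := by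
    intro a ha haL
    rw [Real.cosh_eq]
    have i1 : Real.exp (a / 2) ≤ Real.exp (L / 2) := Real.exp_le_exp.mpr (by linarith)
    have i2 : Real.exp (-(a / 2)) ≤ Real.exp (L / 2) := Real.exp_le_exp.mpr (by linarith)
    linarith
  have c1 := hcosh ℓ₁ (by linarith) h1'
  have c2 := hcosh ℓ₂ (by linarith) h2'
  have hfin : Real.exp x ≤ Real.exp (L / 2 + Real.log (2 / Real.sinh (l / 2))) := by
    rw [Real.exp_add, Real.exp_log (by positivity)]
    refine hx.trans ?_
    rw [zero_div, Real.cosh_zero, one_mul, ← mul_div_assoc]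
    exact div_le_div₀ (by positivity) (by linarith) hS hSS
  exact Real.exp_le_exp.mp hfin
end

section
/- Let l, L, ℓ₀, ℓ₁ be real numbers with 0 < l ≤ L, l ≤ ℓ₁ ≤ L, and ℓ₀ > 0. Let z₀ be a real number with z₀ + 2η(ℓ₀) ≥ 0 satisfying cosh(z₀ + 2η(ℓ₀)) = (cosh(ℓ₁/2) + cosh²(ℓ₀/2)) / sinh²(ℓ₀/2), where η(ℓ) = arsinh(1/sinh(ℓ/2)). Then z₀ ≤ log(cosh(L/2) + cosh²(ℓ₀/2)). -/
theorem truncated_side_bound_two_cusps (l L ℓ₀ ℓ₁ z₀ : ℝ)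
    (hl : 0 < l) (hlL : l ≤ L)
    (h1 : l ≤ ℓ₁) (h1' : ℓ₁ ≤ L) (h0 : 0 < ℓ₀)
    (hz : 0 ≤ z₀ + 2 * η ℓ₀)
    (hhex : Real.cosh (z₀ + 2 * η ℓ₀) =
      (Real.cosh (ℓ₁ / 2) + Real.cosh (ℓ₀ / 2) ^ 2) / Real.sinh (ℓ₀ / 2) ^ 2) :
    z₀ ≤ Real.log (Real.cosh (L / 2) + Real.cosh (ℓ₀ / 2) ^ 2) := by
  have hs : 0 < Real.sinh (ℓ₀ / 2) := Real.sinh_pos_iff.2 (by linarith)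
  have hc : 1 ≤ Real.cosh (ℓ₀ / 2) := Real.one_le_cosh _
  have hA : Real.cosh (ℓ₁ / 2) ≤ Real.cosh (L / 2) := by
    rw [Real.cosh_le_cosh, abs_of_pos (by linarith), abs_of_pos (by linarith)]
    linarith
  have hp : 0 < Real.cosh (ℓ₁ / 2) := Real.cosh_pos _
  have he : 2 / Real.sinh (ℓ₀ / 2) ≤ Real.exp (η ℓ₀) := by
    unfold η
    rw [Real.exp_arsinh]
    have h : 1 / Real.sinh (ℓ₀ / 2) ≤ √(1 + (1 / Real.sinh (ℓ₀ / 2)) ^ 2) :=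
      Real.le_sqrt_of_sq_le (by linarith)
    have h2 : 2 / Real.sinh (ℓ₀ / 2) = 1 / Real.sinh (ℓ₀ / 2) + 1 / Real.sinh (ℓ₀ / 2) := by ring
    linarith
  have he2 : (2 / Real.sinh (ℓ₀ / 2)) ^ 2 ≤ Real.exp (η ℓ₀) ^ 2 :=
    pow_le_pow_left₀ (by positivity) he 2
  have hw : Real.exp z₀ * Real.exp (η ℓ₀) ^ 2 ≤ 2 * Real.cosh (z₀ + 2 * η ℓ₀) := by
    have h3 : Real.exp z₀ * Real.exp (η ℓ₀) ^ 2 = Real.exp (z₀ + 2 * η ℓ₀) := by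
      rw [← Real.exp_nat_mul, ← Real.exp_add]; norm_num
    rw [h3, Real.cosh_eq]
    have := Real.exp_pos (-(z₀ + 2 * η ℓ₀))
    linarith
  rw [hhex] at hw
  have h4 := (mul_le_mul_of_nonneg_left he2 (Real.exp_pos z₀).le).trans hw
  have h5 : Real.exp z₀ * 4 ≤ 2 * (Real.cosh (ℓ₁ / 2) + Real.cosh (ℓ₀ / 2) ^ 2) := by
    have h6 := mul_le_mul_of_nonneg_right h4 (sq_nonneg (Real.sinh (ℓ₀ / 2)))
    field_simp at h6
    linarith
  rw [Real.le_log_iff_exp_le (by positivity)]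
  nlinarith [sq_nonneg (Real.cosh (ℓ₀ / 2))]
end

section
/- Let l, L, ℓ₁ be real numbers with 0 < l ≤ L and l ≤ ℓ₁ ≤ L. Suppose g : ℝ → ℝ and δ > 0 are such that for every ℓ₀ with 0 < ℓ₀ < δ one has g(ℓ₀) + 2η(ℓ₀) ≥ 0 and cosh(g(ℓ₀) + 2η(ℓ₀)) = (cosh(ℓ₁/2) + cosh²(ℓ₀/2)) / sinh²(ℓ₀/2), where η(ℓ) = arsinh(1/sinh(ℓ/2)). If g(ℓ₀) tends to a real number z as ℓ₀ tends to 0 from the right, then z ≤ log(cosh(L/2) + 1). -/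
theorem truncated_side_limit_bound_two_cusps (l L ℓ₁ : ℝ) (g : ℝ → ℝ) (δ : ℝ)
    (hl : 0 < l) (hlL : l ≤ L)
    (h1 : l ≤ ℓ₁) (h1' : ℓ₁ ≤ L) (hδ : 0 < δ)
    (hnn : ∀ ℓ₀, 0 < ℓ₀ → ℓ₀ < δ → 0 ≤ g ℓ₀ + 2 * η ℓ₀)
    (hhex : ∀ ℓ₀, 0 < ℓ₀ → ℓ₀ < δ →
      Real.cosh (g ℓ₀ + 2 * η ℓ₀) =
        (Real.cosh (ℓ₁ / 2) + Real.cosh (ℓ₀ / 2) ^ 2) / Real.sinh (ℓ₀ / 2) ^ 2)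
    (z : ℝ)
    (hlim : Filter.Tendsto g (nhdsWithin 0 (Set.Ioi 0)) (nhds z)) :
    z ≤ Real.log (Real.cosh (L / 2) + 1) := by
  have hc : Filter.Tendsto (fun t : ℝ => Real.cosh (t / 2) ^ 2) (nhdsWithin 0 (Set.Ioi 0)) (nhds 1) := by
    have h : Continuous (fun t : ℝ => Real.cosh (t / 2) ^ 2) := by fun_prop
    have h2 := h.tendsto 0
    simp only [zero_div, Real.cosh_zero, one_pow] at h2
    exact h2.mono_left nhdsWithin_le_nhds
  have hc2 := hc.eventually (gt_mem_nhds (show (1:ℝ) < 2 by norm_num))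
  have hI : ∀ᶠ t in nhdsWithin (0:ℝ) (Set.Ioi 0), t ∈ Set.Ioo 0 δ := Ioo_mem_nhdsGT hδ
  have hCL : Real.cosh (ℓ₁ / 2) ≤ Real.cosh (L / 2) := by
    rw [Real.cosh_le_cosh, abs_of_pos (by linarith), abs_of_pos (by linarith)]
    linarith
  have hC1 := Real.one_le_cosh (L / 2)
  refine le_of_tendsto hlim ?_
  filter_upwards [hc2, hI] with t ht hti
  obtain ⟨ht0, htδ⟩ := hti
  rw [Real.le_log_iff_exp_le (by linarith)]
  have hs : 0 < Real.sinh (t / 2) := Real.sinh_pos_iff.2 (by linarith)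
  have hx := hhex t ht0 htδ
  have hη : 2 / Real.sinh (t / 2) ≤ Real.exp (η t) := by
    unfold η
    rw [Real.exp_arsinh]
    have : 1 / Real.sinh (t / 2) ≤ √(1 + (1 / Real.sinh (t / 2)) ^ 2) :=
      Real.le_sqrt_of_sq_le (by linarith)
    have e : 2 / Real.sinh (t / 2) = 1 / Real.sinh (t / 2) + 1 / Real.sinh (t / 2) := by ring
    linarith
  have h2 : Real.exp (g t) * Real.exp (η t) ^ 2 ≤ 2 * Real.cosh (g t + 2 * η t) := by
    rw [Real.cosh_eq, show g t + 2 * η t = g t + (η t + η t) by ring, Real.exp_add, Real.exp_add]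
    have := Real.exp_pos (-(g t + (η t + η t)))
    nlinarith
  have h3 : (2 / Real.sinh (t / 2)) ^ 2 ≤ Real.exp (η t) ^ 2 := by gcongr
  have h4 := mul_le_mul_of_nonneg_left h3 (Real.exp_pos (g t)).le
  have h5 := h4.trans h2
  rw [hx, div_pow, mul_div_assoc', mul_div_assoc', div_le_div_iff_of_pos_right (by positivity)] at h5
  linarith
end
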